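/- arXiv:1002.4165 — 10 statements merged into one kernel-verified Lean document; each statement's English description precedes it below -/
import Mathlib

section
/- Let H be a real Hilbert space and F : H → H a monotone operator. Let y ∈ H with F(y) = f, let δ ≥ 0 and f_δ ∈ H with ‖f_δ − f‖ ≤ δ, and let (a_n) be a sequence of positive reals strictly decreasing to 0. For each n let V_n ∈ H satisfy F(V_n) + a_n V_n = f_δ. Then limsup_{n→∞} ‖F(V_n) − f_δ‖ ≤ δ. -/
open scoped RealInnerProductSpace
open Filter

/-!
Put `x = aₙ Vₙ`, so that `F Vₙ - f_δ = -x`, together with `e = f_δ - f` and `z = aₙ y`.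
Monotonicity tested at `Vₙ` and `y`, multiplied by `aₙ`, says `⟪x - e, x - z⟫ ≤ 0`, hence
`‖x - z‖² ≤ ⟪e - z, x - z⟫` and `‖x‖ ≤ ‖e‖ + 2‖z‖ ≤ δ + 2 aₙ ‖y‖`
(`norm_le_of_inner_sub_sub_nonpos`). The right-hand side tends to `δ` since `aₙ → 0`.
-/

/-- Geometrically, `x` lies in the ball with diameter `[e, z]`. The constant `2` is not optimal. -/
lemma norm_le_of_inner_sub_sub_nonpos {H : Type*} [NormedAddCommGroup H] [InnerProductSpace ℝ H]
    {x e z : H} (h : ⟪x - e, x - z⟫ ≤ 0) : ‖x‖ ≤ ‖e‖ + 2 * ‖z‖ := by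
  have hsq : ‖x - z‖ * ‖x - z‖ ≤ ‖e - z‖ * ‖x - z‖ := by
    have hsplit : ⟪x - z, x - z⟫ = ⟪x - e, x - z⟫ + ⟪e - z, x - z⟫ := by
      rw [← inner_add_left, sub_add_sub_cancel]
    rw [real_inner_self_eq_norm_mul_norm] at hsplit
    linarith [real_inner_le_norm (e - z) (x - z)]
  have hxz : ‖x - z‖ ≤ ‖e - z‖ := by
    rcases (norm_nonneg (x - z)).eq_or_lt with h0 | h0
    · rw [← h0]
      exact norm_nonneg _
    · exact le_of_mul_le_mul_right hsq h0
  linarith [norm_sub_norm_le x z, norm_sub_le e z]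

/-- For a monotone operator `F`, a solution `F y = f`, noisy data `‖f_δ - f‖ ≤ δ`,
and regularized solutions `F V_n + a_n V_n = f_δ` with `a_n ↓ 0`,
one has `limsup_n ‖F V_n - f_δ‖ ≤ δ`. -/
theorem limsup_discrepancy_le_delta
    {H : Type*} [NormedAddCommGroup H] [InnerProductSpace ℝ H] [CompleteSpace H]
    (F : H → H) (hFmono : ∀ u v : H, 0 ≤ ⟪F u - F v, u - v⟫)
    (f y : H) (hy : F y = f)
    (δ : ℝ) (hδ : 0 ≤ δ) (fδ : H) (hfδ : ‖fδ - f‖ ≤ δ)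
    (a : ℕ → ℝ) (ha_pos : ∀ n, 0 < a n) (ha_anti : StrictAnti a)
    (ha_lim : Tendsto a atTop (nhds 0))
    (V : ℕ → H) (hV : ∀ n, F (V n) + a n • V n = fδ) :
    Filter.limsup (fun n => ‖F (V n) - fδ‖) atTop ≤ δ := by
  have hbound : ∀ n, ‖F (V n) - fδ‖ ≤ δ + 2 * (a n * ‖y‖) := by
    intro n
    have hFV : F (V n) = fδ - a n • V n := eq_sub_of_add_eq (hV n)
    have hinner : ⟪a n • V n - (fδ - f), a n • V n - a n • y⟫ ≤ 0 := by
      have hmono := hFmono (V n) y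
      have hneg : F (V n) - F y = -(a n • V n - (fδ - f)) := by
        rw [hFV, hy]
        abel
      rw [hneg, inner_neg_left] at hmono
      rw [← smul_sub, real_inner_smul_right]
      exact mul_nonpos_of_nonneg_of_nonpos (ha_pos n).le (by linarith)
    have hnorm := norm_le_of_inner_sub_sub_nonpos hinner
    have hres : ‖F (V n) - fδ‖ = ‖a n • V n‖ := by
      rw [hFV, sub_sub_cancel_left, norm_neg]
    rw [norm_smul (a n) y, Real.norm_of_nonneg (ha_pos n).le] at hnorm
    linarith
  have hlim : Tendsto (fun n => δ + 2 * (a n * ‖y‖)) atTop (nhds δ) := by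
    simpa using ((ha_lim.mul_const ‖y‖).const_mul 2).const_add δ
  calc limsup (fun n => ‖F (V n) - fδ‖) atTop
      ≤ limsup (fun n => δ + 2 * (a n * ‖y‖)) atTop :=
        limsup_le_limsup (Eventually.of_forall hbound)
          (isBoundedUnder_of ⟨0, fun n => norm_nonneg (F (V n) - fδ)⟩).isCoboundedUnder_le
          hlim.isBoundedUnder_le
    _ = δ := hlim.limsup_eq
end

section
/- Let H be a real Hilbert space and F : H → H a monotone operator. Let y ∈ H with F(y) = f, let δ ≥ 0 and f_δ ∈ H with ‖f_δ − f‖ ≤ δ, let a > 0, and let V ∈ H satisfy F(V) + aV = f_δ. Then a‖V − y‖ ≤ a‖y‖ + δ; in particular ‖V‖ ≤ 2‖y‖ + δ/a. -/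
/-!
Put `w = V - y`. Subtracting the two equations gives `F V - F y = (fδ - f) - a • w - a • y`.
Pairing with `w` and using monotonicity yields `a ‖w‖ ^ 2 ≤ ⟪fδ - f, w⟫ - a ⟪y, w⟫`, which is at most
`(δ + a ‖y‖) ‖w‖` by Cauchy-Schwarz; cancelling `‖w‖` gives the first bound. The second follows by
dividing by `a` and applying the triangle inequality to `V = w + y`.
-/

open scoped RealInnerProductSpace

/-- For a monotone operator `F`, a solution `F y = f`, noisy data `‖f_δ - f‖ ≤ δ`,
and a regularized solution `F V + a V = f_δ` (`a > 0`), one has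
`a ‖V - y‖ ≤ a ‖y‖ + δ`, and in particular `‖V‖ ≤ 2 ‖y‖ + δ / a`. -/
theorem regularized_solution_bound
    {H : Type*} [NormedAddCommGroup H] [InnerProductSpace ℝ H] [CompleteSpace H]
    (F : H → H) (hFmono : ∀ u v : H, 0 ≤ ⟪F u - F v, u - v⟫)
    (f y : H) (hy : F y = f)
    (δ : ℝ) (hδ : 0 ≤ δ) (fδ : H) (hfδ : ‖fδ - f‖ ≤ δ)
    (a : ℝ) (ha : 0 < a) (V : H) (hV : F V + a • V = fδ) :
    a * ‖V - y‖ ≤ a * ‖y‖ + δ ∧ ‖V‖ ≤ 2 * ‖y‖ + δ / a := by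
  have h := hFmono V y
  -- Split off the coercive part `a • (V - y)` so that monotonicity bounds `a * ‖V - y‖ ^ 2`.
  have e : F V - F y = (fδ - f) - a • (V - y) - a • y := by
    rw [hy, ← hV, smul_sub]; abel
  rw [e, inner_sub_left, inner_sub_left, real_inner_smul_left, real_inner_smul_left,
    real_inner_self_eq_norm_sq] at h
  have h1 : ⟪fδ - f, V - y⟫ ≤ δ * ‖V - y‖ :=
    (real_inner_le_norm _ _).trans (by gcongr)
  have h2 : -⟪y, V - y⟫ ≤ ‖y‖ * ‖V - y‖ :=
    (neg_le_abs _).trans (abs_real_inner_le_norm _ _)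
  have key : a * ‖V - y‖ ≤ a * ‖y‖ + δ := by
    rcases (norm_nonneg (V - y)).eq_or_lt with h0 | h0
    · rw [← h0, mul_zero]; positivity
    · refine le_of_mul_le_mul_right ?_ h0
      have h3 := mul_le_mul_of_nonneg_left h2 ha.le
      linarith
  refine ⟨key, ?_⟩
  have h4 : ‖V - y‖ ≤ ‖y‖ + δ / a := by
    rw [← mul_le_mul_iff_right₀ ha, mul_add, mul_div_cancel₀ _ ha.ne']
    exact key
  have h5 : ‖V‖ ≤ ‖V - y‖ + ‖y‖ := norm_le_norm_sub_add V y
  linarith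
end

section
/- Let H be a real Hilbert space and F : H → H a monotone operator. Let g ∈ H, let 0 < b ≤ a be real numbers, and let V_a, V_b ∈ H satisfy F(V_a) + a V_a = g and F(V_b) + b V_b = g. Then ‖V_a − V_b‖ ≤ ((a − b)/a)·‖V_b‖. -/
/-!
Subtracting the two equations gives `F Va - F Vb = -a (Va - Vb) - (a - b) Vb`. Pairing this with
`Va - Vb`, monotonicity yields `a ‖Va - Vb‖² ≤ -(a - b) ⟪Vb, Va - Vb⟫`, and Cauchy–Schwarz bounds
the right-hand side by `(a - b) ‖Vb‖ ‖Va - Vb‖`; it remains to divide by `a ‖Va - Vb‖`.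
-/

open scoped RealInnerProductSpace

/-- For a monotone operator `F` and regularized solutions `F V_a + a V_a = g`,
`F V_b + b V_b = g` with `0 < b ≤ a`, one has `‖V_a - V_b‖ ≤ ((a - b)/a) ‖V_b‖`. -/
theorem regularized_solutions_parameter_stability
    {H : Type*} [NormedAddCommGroup H] [InnerProductSpace ℝ H] [CompleteSpace H]
    (F : H → H) (hFmono : ∀ u v : H, 0 ≤ ⟪F u - F v, u - v⟫)
    (g : H) (a b : ℝ) (hb : 0 < b) (hba : b ≤ a)
    (Va Vb : H) (hVa : F Va + a • Va = g) (hVb : F Vb + b • Vb = g) :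
    ‖Va - Vb‖ ≤ (a - b) / a * ‖Vb‖ := by
  have ha : 0 < a := hb.trans_le hba
  have hF : F Va - F Vb = -(a • (Va - Vb)) - (a - b) • Vb := by
    rw [eq_sub_of_add_eq hVa, eq_sub_of_add_eq hVb]
    module
  have hmono := hFmono Va Vb
  rw [hF, inner_sub_left, inner_neg_left, real_inner_smul_left, real_inner_smul_left,
    real_inner_self_eq_norm_sq] at hmono
  have hCS : -⟪Vb, Va - Vb⟫ ≤ ‖Vb‖ * ‖Va - Vb‖ :=
    (neg_le_abs _).trans (abs_real_inner_le_norm _ _)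
  have hmul := mul_le_mul_of_nonneg_left hCS (sub_nonneg.2 hba)
  rw [div_mul_eq_mul_div, le_div_iff₀ ha]
  rcases (norm_nonneg (Va - Vb)).eq_or_lt with h0 | hpos
  · rw [← h0, zero_mul]
    exact mul_nonneg (sub_nonneg.2 hba) (norm_nonneg _)
  · refine le_of_mul_le_mul_right ?_ hpos
    linarith
end

section
/- Let H be a real Hilbert space, F : H → H a monotone operator, and f_δ ∈ H with ‖F(0) − f_δ‖ > 0. Let (a_n)_{n≥0} be a strictly decreasing sequence of positive reals, and for each n let V_n ∈ H satisfy F(V_n) + a_n V_n = f_δ. Set ℓ_n := ‖F(V_n) − f_δ‖ and k_n := ‖V_n‖. Then ℓ_n = a_n k_n for all n, the sequence (ℓ_n) is non-increasing, and the sequence (k_n) is non-decreasing. -/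
/-!
The identity `ℓ_n = a_n k_n` is the norm of `F V_n - f_δ = -a_n V_n`. For `n ≤ m`, testing
monotonicity of `F` on `V_n, V_m`, where `F V_n - F V_m = a_m V_m - a_n V_n`, and applying
Cauchy–Schwarz to the cross term gives `0 ≤ (k_n - k_m) (a_m k_m - a_n k_n)`
(`discrepancy_product_nonneg`). Since `0 < a_m ≤ a_n`, `k_m < k_n` forces
`a_m k_m < a_n k_n`, hence a negative product; so `k_n ≤ k_m`. If `a_m k_m > a_n k_n`, the product
forces `k_m ≤ k_n`, which yields `a_m k_m ≤ a_n k_n`, a contradiction.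
-/

open scoped RealInnerProductSpace

/-- The hypothesis is what monotonicity of `F` says about solutions of `F u + a • u = F v + b • v`. -/
lemma discrepancy_product_nonneg {H : Type*} [NormedAddCommGroup H] [InnerProductSpace ℝ H]
    {a b : ℝ} (ha : 0 < a) (hb : 0 < b) {u v : H} (h : 0 ≤ ⟪b • v - a • u, u - v⟫) :
    0 ≤ (‖u‖ - ‖v‖) * (b * ‖v‖ - a * ‖u‖) := by
  simp only [inner_sub_left, inner_sub_right, real_inner_smul_left,
    real_inner_self_eq_norm_sq, real_inner_comm u v] at h
  have hcs : (a + b) * ⟪u, v⟫ ≤ (a + b) * (‖u‖ * ‖v‖) :=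
    mul_le_mul_of_nonneg_left (real_inner_le_norm u v) (by positivity)
  nlinarith

/-- For a monotone operator `F`, noisy data with `‖F 0 - f_δ‖ > 0`, a strictly
decreasing positive sequence `a_n`, and regularized solutions
`F V_n + a_n V_n = f_δ`: the discrepancies `ℓ_n = ‖F V_n - f_δ‖` satisfy
`ℓ_n = a_n ‖V_n‖`, `ℓ_n` is non-increasing and `k_n = ‖V_n‖` is non-decreasing. -/
theorem discrepancy_monotonicity
    {H : Type*} [NormedAddCommGroup H] [InnerProductSpace ℝ H] [CompleteSpace H]
    (F : H → H) (hFmono : ∀ u v : H, 0 ≤ ⟪F u - F v, u - v⟫)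
    (fδ : H) (hne : 0 < ‖F 0 - fδ‖)
    (a : ℕ → ℝ) (ha_pos : ∀ n, 0 < a n) (ha_anti : StrictAnti a)
    (V : ℕ → H) (hV : ∀ n, F (V n) + a n • V n = fδ) :
    (∀ n, ‖F (V n) - fδ‖ = a n * ‖V n‖) ∧
      Antitone (fun n => ‖F (V n) - fδ‖) ∧
      Monotone (fun n => ‖V n‖) := by
  have hsub : ∀ n, F (V n) - fδ = -(a n • V n) := fun n => by
    rw [← hV n]; abel
  have hnorm : ∀ n, ‖F (V n) - fδ‖ = a n * ‖V n‖ := fun n => by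
    rw [hsub, norm_neg, norm_smul, Real.norm_of_nonneg (ha_pos n).le]
  have hprod : ∀ n m, 0 ≤ (‖V n‖ - ‖V m‖) * (a m * ‖V m‖ - a n * ‖V n‖) := fun n m => by
    refine discrepancy_product_nonneg (ha_pos n) (ha_pos m) ?_
    have hF : F (V n) - F (V m) = a m • V m - a n • V n := by
      rw [← sub_sub_sub_cancel_right _ _ fδ, hsub, hsub]; abel
    rw [← hF]
    exact hFmono _ _
  have hk : Monotone (fun n => ‖V n‖) := fun n m hnm => by
    by_contra! hlt
    have h1 : a m * ‖V m‖ < a m * ‖V n‖ := mul_lt_mul_of_pos_left hlt (ha_pos m)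
    have h2 : a m * ‖V n‖ ≤ a n * ‖V n‖ :=
      mul_le_mul_of_nonneg_right (ha_anti.antitone hnm) (norm_nonneg _)
    exact (mul_neg_of_pos_of_neg (sub_pos.2 hlt) (by linarith)).not_ge (hprod n m)
  refine ⟨hnorm, fun n m hnm => ?_, hk⟩
  simp only [hnorm]
  by_contra! hlt
  have h1 : ‖V m‖ ≤ ‖V n‖ := sub_nonneg.1 (nonneg_of_mul_nonneg_left (hprod n m) (sub_pos.2 hlt))
  have h2 : a m * ‖V m‖ ≤ a n * ‖V n‖ :=
    mul_le_mul (ha_anti.antitone hnm) h1 (norm_nonneg _) (ha_pos n).le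
  exact hlt.not_ge h2
end

section
/- Let H be a real Hilbert space and let F : H → H be Fréchet differentiable on H with derivative F′(u) a bounded linear operator for each u. Assume F is monotone, F′(u) is selfadjoint for every u ∈ H, and for a given R > 0 there is a constant M(R) > 0 with ‖F′(u)‖ ≤ M(R) for all u in the closed ball B(0,R). Then ⟨F(u) − F(v), u − v⟩ ≥ (1/M(R))·‖F(u) − F(v)‖² for all u, v ∈ B(0,R); i.e., F is locally σ-inverse monotone with σ_R = 1/M(R). -/
open scoped RealInnerProductSpace

/-!
Monotonicity makes every `F' u` positive semidefinite. With `w = u - v`, `h = F u - F v`, and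
`A = F' (v + t w)` for a point of the segment, positivity tested on `w - h / M`, selfadjointness
and `‖A‖ ≤ M` give `⟪A w, w⟫ - (2 / M) ⟪A w, h⟫ + (1 / M) ‖h‖² ≥ 0`. The scalar mean value theorem
for `t ↦ ⟪F (v + t w), w - (2 / M) h⟫` turns this into `⟪h, w⟫ - (2 / M) ‖h‖² + (1 / M) ‖h‖² ≥ 0`,
which is the claim. As the test vector is fixed, no continuity of `F'` is needed.
-/

lemma hasDerivAt_inner_line {H : Type*} [NormedAddCommGroup H] [InnerProductSpace ℝ H]
    {F : H → H} {F' : H → H →L[ℝ] H} (hF' : ∀ u : H, HasFDerivAt F (F' u) u)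
    (v w z : H) (t : ℝ) :
    HasDerivAt (fun s : ℝ => ⟪F (v + s • w), z⟫) ⟪F' (v + t • w) w, z⟫ t := by
  have h1 : HasDerivAt (fun s : ℝ => v + s • w) w t := by
    simpa using ((hasDerivAt_id t).smul_const w).const_add v
  have h2 : HasDerivAt (fun s : ℝ => F (v + s • w)) (F' (v + t • w) w) t :=
    (hF' (v + t • w)).comp_hasDerivAt t h1
  simpa using h2.inner ℝ (hasDerivAt_const t z)

lemma inner_deriv_self_nonneg {H : Type*} [NormedAddCommGroup H] [InnerProductSpace ℝ H]
    {F : H → H} {F' : H → H →L[ℝ] H} (hF' : ∀ u : H, HasFDerivAt F (F' u) u)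
    (hFmono : ∀ u v : H, 0 ≤ ⟪F u - F v, u - v⟫) (u x : H) : 0 ≤ ⟪F' u x, x⟫ := by
  have hmono : Monotone (fun s : ℝ => ⟪F (u + s • x), x⟫) := by
    intro a b hab
    rcases hab.eq_or_lt with rfl | hlt
    · exact le_rfl
    have h := hFmono (u + b • x) (u + a • x)
    have e : u + b • x - (u + a • x) = (b - a) • x := by module
    rw [e, inner_smul_right, inner_sub_left] at h
    exact sub_nonneg.mp (nonneg_of_mul_nonneg_right h (sub_pos.mpr hlt))
  have hd := hasDerivAt_inner_line hF' u x x 0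
  rw [zero_smul, add_zero] at hd
  rw [← hd.deriv]
  exact hmono.deriv_nonneg

/-- A Fréchet differentiable monotone operator on a real Hilbert space whose
derivative is selfadjoint and bounded by `M R` on the ball `B(0,R)` is locally
`σ`-inverse monotone on `B(0,R)` with `σ_R = 1 / M R`. -/
theorem monotone_selfadjoint_deriv_locally_sigma_inverse
    {H : Type*} [NormedAddCommGroup H] [InnerProductSpace ℝ H] [CompleteSpace H]
    (F : H → H) (F' : H → H →L[ℝ] H)
    (hF' : ∀ u : H, HasFDerivAt F (F' u) u)
    (hFmono : ∀ u v : H, 0 ≤ ⟪F u - F v, u - v⟫)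
    (hsa : ∀ u x y : H, ⟪F' u x, y⟫ = ⟪x, F' u y⟫)
    (R : ℝ) (hR : 0 < R) (M : ℝ) (hM : 0 < M)
    (hbound : ∀ u ∈ Metric.closedBall (0 : H) R, ‖F' u‖ ≤ M) :
    ∀ u ∈ Metric.closedBall (0 : H) R, ∀ v ∈ Metric.closedBall (0 : H) R,
      (1 / M) * ‖F u - F v‖ ^ 2 ≤ ⟪F u - F v, u - v⟫ := by
  intro u hu v hv
  set w := u - v with hw
  set h := F u - F v with hh
  have hd := hasDerivAt_inner_line hF' v w (w - (2 / M) • h)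
  obtain ⟨t, ht, hslope⟩ := exists_hasDerivAt_eq_slope
    (fun s : ℝ => ⟪F (v + s • w), w - (2 / M) • h⟫) _ zero_lt_one
    (fun s _ => (hd s).continuousAt.continuousWithinAt) (fun s _ => hd s)
  have hmem : v + t • w ∈ Metric.closedBall (0 : H) R :=
    (convex_closedBall (0 : H) R).add_smul_sub_mem hv hu ⟨ht.1.le, ht.2.le⟩
  set A := F' (v + t • w) with hA
  have hvw : v + w = u := by rw [hw]; abel
  have hpos : 0 ≤ ⟪A (w - (1 / M) • h), w - (1 / M) • h⟫ :=
    inner_deriv_self_nonneg hF' hFmono _ _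
  have hAh : ⟪A h, h⟫ ≤ M * ‖h‖ ^ 2 := by
    calc ⟪A h, h⟫ ≤ ‖A h‖ * ‖h‖ := real_inner_le_norm _ _
      _ ≤ (M * ‖h‖) * ‖h‖ := by
        gcongr
        exact A.le_of_opNorm_le (hbound _ hmem) h
      _ = M * ‖h‖ ^ 2 := by ring
  have hsym : ⟪A h, w⟫ = ⟪A w, h⟫ := by
    rw [hsa, real_inner_comm]
  simp only [one_smul, zero_smul, add_zero, sub_zero, div_one, hvw] at hslope
  rw [← inner_sub_left, ← hh] at hslope
  simp only [map_sub, map_smul, inner_sub_left, inner_sub_right, inner_smul_left,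
    inner_smul_right, hsym, real_inner_self_eq_norm_sq, RCLike.conj_to_real] at hpos hslope
  have hq : 1 / M * (1 / M * ⟪A h, h⟫) ≤ 1 / M * ‖h‖ ^ 2 := by
    have : 1 / M * (1 / M * ⟪A h, h⟫) ≤ 1 / M * (1 / M * (M * ‖h‖ ^ 2)) := by gcongr
    refine this.trans_eq ?_
    field_simp
  have h2 : 2 / M = 2 * (1 / M) := by ring
  rw [h2] at hslope
  linarith
end

section
/- Let a : [0,∞) → (0,∞) be continuously differentiable, strictly decreasing with a(t) → 0 as t → ∞, and such that ν(t) := |a′(t)|/a(t)² is decreasing with ν(t) → 0 as t → ∞. Let h > 0 satisfy a(0)h ≤ 2 and ν(0) ≤ 1/10, and set a_n := a(nh) and φ_n := Σ_{i=1}^{n} a_i h/2. Let H be a real Hilbert space, F : H → H monotone, f_δ ∈ H with ‖F(0) − f_δ‖ > 0, and for each n let V_n ∈ H satisfy F(V_n) + a_n V_n = f_δ. Then for every n ≥ 1: e^{−φ_n} Σ_{i=0}^{n−1} e^{φ_{i+1}} (a_i − a_{i+1}) ‖V_i‖ ≤ (1/2)·a_n·‖V_n‖. -/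
open scoped RealInnerProductSpace
open Filter Finset

/-!
Write `S n` for the left-hand side. It satisfies the recursion
`S (n+1) = e^{-x} S n + (a_n - a_{n+1}) ‖V n‖` with `x = a_{n+1} h / 2 ∈ (0, 1]`, and the bound
`S n ≤ a_n ‖V n‖ / 2` is proved by induction from `S 0 = 0`.

Monotonicity of `F` makes `‖V n‖` nondecreasing as `a_n` decreases (`norm_regularized_le`), so the
induction step reduces to `a_n (e^{-x} + 2) ≤ 3 a_{n+1}`. Since `(1/a)' = |a'|/a² = ν ≤ 1/10`, one has
`1/a_{n+1} - 1/a_n ≤ h/10` (`inv_sub_inv_le`), that is `a_{n+1}/a_n ≥ 1 - x/5`, and what remains is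
`e^{-x} ≤ 1 - 3x/5` on `[0, 1]` (`exp_neg_le_linear`), which follows from convexity and
`e^{-1} < 2/5`.
-/

theorem exp_neg_le_linear {x : ℝ} (h0 : 0 ≤ x) (h1 : x ≤ 1) :
    Real.exp (-x) ≤ 1 - 3 / 5 * x := by
  have hc := convexOn_exp.2 (Set.mem_univ (0 : ℝ)) (Set.mem_univ (-1 : ℝ))
    (sub_nonneg.2 h1) h0 (by ring)
  simp only [smul_eq_mul, mul_zero, zero_add, Real.exp_zero, mul_one, mul_neg] at hc
  have he := Real.exp_neg_one_lt_d9
  nlinarith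

theorem inv_sub_inv_le {a a' : ℝ → ℝ}
    (ha_deriv : ∀ t : ℝ, 0 ≤ t → HasDerivAt a (a' t) t)
    (ha_pos : ∀ t : ℝ, 0 ≤ t → 0 < a t)
    {c : ℝ} (hν : ∀ t : ℝ, 0 ≤ t → |a' t| / (a t) ^ 2 ≤ c)
    {s t : ℝ} (hs : 0 ≤ s) (hst : s < t) :
    (a t)⁻¹ - (a s)⁻¹ ≤ c * (t - s) := by
  have hd : ∀ u : ℝ, 0 ≤ u → HasDerivAt (fun u => (a u)⁻¹) (-a' u / a u ^ 2) u := fun u hu =>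
    (ha_deriv u hu).fun_inv (ha_pos u hu).ne'
  obtain ⟨u, hu, heq⟩ := exists_hasDerivAt_eq_slope (fun u => (a u)⁻¹)
    (fun u => -a' u / a u ^ 2) hst
    (fun u hu => (hd u (hs.trans hu.1)).continuousAt.continuousWithinAt)
    (fun u hu => hd u (hs.trans hu.1.le))
  have hle : -a' u / a u ^ 2 ≤ c :=
    (div_le_div_of_nonneg_right (neg_le_abs (a' u)) (sq_nonneg _)).trans
      (hν u (hs.trans hu.1.le))
  rw [heq, div_le_iff₀ (sub_pos.2 hst)] at hle
  exact hle

/-- The norm of a regularized solution does not decrease when the regularization parameter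
decreases: monotonicity gives `(α ‖u‖ - β ‖v‖) (‖u‖ - ‖v‖) ≤ 0`. -/
theorem norm_regularized_le {H : Type*} [NormedAddCommGroup H] [InnerProductSpace ℝ H]
    {F : H → H} (hFmono : ∀ u v : H, 0 ≤ ⟪F u - F v, u - v⟫)
    {g u v : H} {α β : ℝ} (hβ : 0 < β) (hαβ : β ≤ α)
    (hu : F u + α • u = g) (hv : F v + β • v = g) : ‖u‖ ≤ ‖v‖ := by
  have hm := hFmono u v
  rw [eq_sub_of_add_eq hu, eq_sub_of_add_eq hv,
    show g - α • u - (g - β • v) = β • v - α • u by abel] at hm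
  simp only [inner_sub_left, inner_sub_right, real_inner_smul_left, real_inner_self_eq_norm_sq,
    real_inner_comm u v] at hm
  rw [real_inner_comm] at hm
  have hcs := real_inner_le_norm u v
  by_contra! hlt
  have hcomm := real_inner_comm u v
  have hcs' := mul_le_mul_of_nonneg_left hcs (by linarith : 0 ≤ α + β)
  have hpos : β * ‖v‖ < α * ‖u‖ :=
    (mul_lt_mul_of_pos_left hlt hβ).trans_le (mul_le_mul_of_nonneg_right hαβ (norm_nonneg _))
  nlinarith [mul_pos (sub_pos.2 hpos) (sub_pos.2 hlt)]

/-- The scalar inequality behind the induction step, with `p = a_n` and `q = a_{n+1}`. -/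
theorem step_scalar {p q h : ℝ} (hp : 0 < p) (hq : 0 < q) (hh : 0 < h) (hqh : q * h ≤ 2)
    (hinv : q⁻¹ - p⁻¹ ≤ 1 / 10 * h) :
    p * (Real.exp (-(q * h / 2)) + 2) ≤ 3 * q := by
  have hx : 0 < q * h := mul_pos hq hh
  have he := exp_neg_le_linear (x := q * h / 2) (by linarith) (by linarith)
  have hpq : p - q ≤ 1 / 10 * h * (p * q) := by
    have := mul_le_mul_of_nonneg_right hinv (mul_pos hp hq).le
    have e : (q⁻¹ - p⁻¹) * (p * q) = p - q := by field_simp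
    linarith
  have := mul_le_mul_of_nonneg_left he hp.le
  nlinarith

/-- Lemma on the weighted sums `e^{-φ_n} Σ_{i=0}^{n-1} e^{φ_{i+1}} (a_i - a_{i+1}) ‖V_i‖`
with `φ_n = Σ_{i=1}^n a_i h / 2`, under the standing assumptions on the regularizing
function `a(t)` together with `a(0) h ≤ 2` and `ν(0) ≤ 1/10`. -/
theorem weighted_sum_estimate
    {H : Type*} [NormedAddCommGroup H] [InnerProductSpace ℝ H] [CompleteSpace H]
    (a a' : ℝ → ℝ)
    (ha_deriv : ∀ t : ℝ, 0 ≤ t → HasDerivAt a (a' t) t)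
    (ha'_cont : ContinuousOn a' (Set.Ici (0 : ℝ)))
    (ha_pos : ∀ t : ℝ, 0 ≤ t → 0 < a t)
    (ha_anti : StrictAntiOn a (Set.Ici (0 : ℝ)))
    (ha_lim : Tendsto a atTop (nhds 0))
    (hν_anti : AntitoneOn (fun t => |a' t| / (a t) ^ 2) (Set.Ici (0 : ℝ)))
    (hν_lim : Tendsto (fun t => |a' t| / (a t) ^ 2) atTop (nhds 0))
    (h : ℝ) (hh : 0 < h) (hah : a 0 * h ≤ 2) (hν0 : |a' 0| / (a 0) ^ 2 ≤ 1 / 10)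
    (F : H → H) (hFmono : ∀ u v : H, 0 ≤ ⟪F u - F v, u - v⟫)
    (fδ : H) (hne : 0 < ‖F 0 - fδ‖)
    (V : ℕ → H) (hV : ∀ n : ℕ, F (V n) + a (n * h) • V n = fδ) :
    ∀ n : ℕ, 1 ≤ n →
      Real.exp (-(∑ i ∈ Finset.Icc 1 n, a (i * h) * h / 2)) *
          ∑ i ∈ Finset.range n,
            Real.exp (∑ j ∈ Finset.Icc 1 (i + 1), a (j * h) * h / 2) *
              ((a (i * h) - a ((i + 1) * h)) * ‖V i‖)
        ≤ (1 / 2) * (a (n * h) * ‖V n‖) := by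
  have hν : ∀ t : ℝ, 0 ≤ t → |a' t| / (a t) ^ 2 ≤ 1 / 10 := fun t ht =>
    (hν_anti (Set.mem_Ici.2 le_rfl) (Set.mem_Ici.2 ht) ht).trans hν0
  intro n hn
  -- The bound also holds at `n = 0`, where the sum is empty, so the induction starts there.
  clear hn
  induction n with
  | zero =>
    have := ha_pos 0 le_rfl
    simp only [Finset.range_zero, Finset.sum_empty, mul_zero, Nat.cast_zero, zero_mul]
    positivity
  | succ n ih =>
    have hs : (0 : ℝ) ≤ n * h := by positivity
    have ht : (0 : ℝ) ≤ ((n + 1 : ℕ) : ℝ) * h := by positivity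
    have hst : (n : ℝ) * h < ((n + 1 : ℕ) : ℝ) * h := by push_cast; linarith
    have hinv := inv_sub_inv_le ha_deriv ha_pos hν hs hst
    rw [show ((n + 1 : ℕ) : ℝ) * h - n * h = h by push_cast; ring] at hinv
    have hqh : a (((n + 1 : ℕ) : ℝ) * h) * h ≤ 2 :=
      (mul_le_mul_of_nonneg_right (ha_anti.antitoneOn (Set.mem_Ici.2 le_rfl)
        (Set.mem_Ici.2 ht) ht) hh.le).trans hah
    have hstep := step_scalar (ha_pos _ hs) (ha_pos _ ht) hh hqh hinv
    have hV' := norm_regularized_le hFmono (ha_pos _ ht)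
      (ha_anti (Set.mem_Ici.2 hs) (Set.mem_Ici.2 ht) hst).le (hV n) (hV (n + 1))
    rw [Finset.sum_range_succ, mul_add, ← mul_assoc (Real.exp (-_)) (Real.exp _) (_ * _),
      ← Real.exp_add, neg_add_cancel, Real.exp_zero, one_mul,
      Finset.sum_Icc_succ_top (by omega), neg_add, Real.exp_add,
      mul_comm (Real.exp (-∑ i ∈ Finset.Icc 1 n, _)), mul_assoc]
    have hq := ha_pos _ ht
    have hcast : ((n : ℝ) + 1) = ((n + 1 : ℕ) : ℝ) := by push_cast; ring
    rw [hcast]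
    have h1 := mul_le_mul_of_nonneg_left ih
      (Real.exp_pos (-(a (((n + 1 : ℕ) : ℝ) * h) * h / 2))).le
    have h2 := mul_le_mul_of_nonneg_right hstep (norm_nonneg (V n))
    have h3 := mul_le_mul_of_nonneg_left hV' hq.le
    linarith
end

section
/- Let a : [0,∞) → (0,∞) be continuously differentiable, strictly decreasing with a(t) → 0 as t → ∞, and such that ν(t) := |a′(t)|/a(t)² is decreasing with ν(t) → 0 as t → ∞. Let h > 0, a_n := a(nh), φ_n := h Σ_{i=0}^{n} a_i, and φ(t) := ∫₀ᵗ a(s) ds. Then for all n ≥ 1: (i) e^{−φ_{n−1}} Σ_{i=0}^{n−1} e^{φ_i} (a_i − a_{i+1}) ≤ e^{a(0)h} e^{−φ(nh)} ∫₀^{nh} e^{φ(s)} |a′(s)| ds, and (ii) e^{−φ_{n−1}} Σ_{i=0}^{n−1} e^{φ_i} (a_i − a_{i+1})/a_i ≤ e^{a(0)h} e^{−φ(nh)} ∫₀^{nh} e^{φ(s)} |a′(s)|/a(s) ds. -/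
/-!
Both inequalities are instances of one comparison, `discrete_le_continuous`: if `0 ≤ g` is
continuous and `D i ≤ ∫ g` over `[i h, (i + 1) h]`, then
`e^{-φ_{n-1}} Σ_{i<n} e^{φ_i} D i ≤ e^{a(0) h} e^{-φ(nh)} ∫₀^{nh} e^{φ} g`.
It is proved by induction on `n`. Passing from `n` to `n + 1` multiplies the left side by
`e^{-h a_n}` and the right side by `e^{-∫ a}` over `[n h, (n + 1) h]`, which is at least as large
because `a` is decreasing. The left side gains `D n`, and the right side gains
`e^{a(0) h} ∫ e^{φ(s) - φ((n+1)h)} g(s) ds ≥ ∫ g ≥ D n`, since `φ((n+1)h) - φ(s) ≤ a(0) h` there.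

The theorem follows with `g = |a'|` and `g = |a'| / a`, using `a_i - a_{i+1} = ∫ -a'` and, for
the second, `1 / a_i ≤ 1 / a(s)` for `s ≥ i h`.
-/

open Filter Finset

lemma integrable_of_contOn_Ici {f : ℝ → ℝ} (hf : ContinuousOn f (Set.Ici 0)) {x y : ℝ}
    (hx : 0 ≤ x) (hy : 0 ≤ y) : IntervalIntegrable f MeasureTheory.volume x y :=
  (hf.mono fun _ ht => (le_min hx hy).trans ht.1).intervalIntegrable

lemma primitive_contOn {a : ℝ → ℝ} (ha : ContinuousOn a (Set.Ici 0)) {x y : ℝ}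
    (hx : 0 ≤ x) (hxy : x ≤ y) :
    ContinuousOn (fun s => ∫ t in (0 : ℝ)..s, a t) (Set.uIcc x y) := by
  have h0 : 0 ≤ y := hx.trans hxy
  have h1 : ContinuousOn (fun s => ∫ t in (0 : ℝ)..s, a t) (Set.uIcc 0 y) := by
    apply intervalIntegral.continuousOn_primitive_interval
    apply ContinuousOn.integrableOn_compact isCompact_uIcc
    refine ha.mono fun t ht => ?_
    rw [Set.uIcc_of_le h0] at ht
    exact ht.1
  refine h1.mono fun t ht => ?_
  rw [Set.uIcc_of_le hxy] at ht
  rw [Set.uIcc_of_le h0]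
  exact ⟨hx.trans ht.1, ht.2⟩

/-- An antitone function is at most its left end value, so its integral is at most that value
times the length. -/
lemma integral_le_left {a : ℝ → ℝ} (ha : ContinuousOn a (Set.Ici 0))
    (hanti : AntitoneOn a (Set.Ici 0)) {x y : ℝ} (hx : 0 ≤ x) (hxy : x ≤ y) :
    ∫ t in x..y, a t ≤ (y - x) * a x := by
  have := intervalIntegral.integral_mono_on hxy
    (integrable_of_contOn_Ici ha hx (hx.trans hxy)) (intervalIntegrable_const (c := a x))
    (fun t ht => hanti hx (hx.trans ht.1) ht.1)
  simpa using this

/-- The comparison behind both inequalities, for arbitrary increments `D i` dominated by the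
integrals of a nonnegative continuous `g` over the mesh intervals. -/
lemma discrete_le_continuous {a g : ℝ → ℝ} {D : ℕ → ℝ} {h : ℝ} (hh : 0 < h)
    (ha : ContinuousOn a (Set.Ici 0)) (hanti : AntitoneOn a (Set.Ici 0))
    (hpos : ∀ t : ℝ, 0 ≤ t → 0 < a t)
    (hg : ContinuousOn g (Set.Ici 0)) (hg0 : ∀ t : ℝ, 0 ≤ t → 0 ≤ g t)
    (hD : ∀ i : ℕ, D i ≤ ∫ s in (i * h)..((i + 1) * h), g s) (n : ℕ) :
    Real.exp (-(h * ∑ i ∈ Finset.range n, a (i * h))) *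
        ∑ i ∈ Finset.range n, Real.exp (h * ∑ j ∈ Finset.range (i + 1), a (j * h)) * D i
      ≤ Real.exp (a 0 * h) * Real.exp (-(∫ s in (0 : ℝ)..(n * h), a s)) *
          ∫ s in (0 : ℝ)..(n * h), Real.exp (∫ x in (0 : ℝ)..s, a x) * g s := by
  induction n with
  | zero => simp
  | succ n ih =>
    have hn : (0 : ℝ) ≤ n * h := by positivity
    have hn1 : (n : ℝ) * h ≤ (n + 1) * h := by nlinarith
    have hn2 : (0 : ℝ) ≤ (n + 1) * h := hn.trans hn1
    have hint : ∀ x y : ℝ, 0 ≤ x → x ≤ y → IntervalIntegrable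
        (fun s => Real.exp (∫ x in (0 : ℝ)..s, a x) * g s) MeasureTheory.volume x y := by
      intro x y hx hxy
      apply ContinuousOn.intervalIntegrable
      refine (Real.continuous_exp.comp_continuousOn (primitive_contOn ha hx hxy)).mul
        (hg.mono fun t ht => ?_)
      rw [Set.uIcc_of_le hxy] at ht
      exact hx.trans ht.1
    have hsplit := intervalIntegral.integral_add_adjacent_intervals
      (hint 0 _ le_rfl hn) (hint _ _ hn hn1)
    have hphi := intervalIntegral.integral_add_adjacent_intervals
      (integrable_of_contOn_Ici ha le_rfl hn) (integrable_of_contOn_Ici ha hn hn2)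
    have hstep : ∫ t in ((n : ℝ) * h)..((n + 1) * h), a t ≤ h * a (n * h) := by
      have := integral_le_left ha hanti hn hn1
      linarith
    have hR : 0 ≤ ∫ s in (0 : ℝ)..(n * h), Real.exp (∫ x in (0 : ℝ)..s, a x) * g s :=
      intervalIntegral.integral_nonneg hn fun s hs => mul_nonneg (Real.exp_pos _).le (hg0 s hs.1)
    have hDn : D n ≤ Real.exp (a 0 * h) * Real.exp (-(∫ s in (0 : ℝ)..((n + 1) * h), a s)) *
        ∫ s in ((n : ℝ) * h)..((n + 1) * h), Real.exp (∫ x in (0 : ℝ)..s, a x) * g s := by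
      refine (hD n).trans ?_
      rw [← intervalIntegral.integral_const_mul]
      refine intervalIntegral.integral_mono_on hn1 (integrable_of_contOn_Ici hg hn hn2)
        ((hint _ _ hn hn1).const_mul _) fun s hs => ?_
      have hs0 : 0 ≤ s := hn.trans hs.1
      have h1 := intervalIntegral.integral_add_adjacent_intervals
        (integrable_of_contOn_Ici ha le_rfl hs0) (integrable_of_contOn_Ici ha hs0 hn2)
      have h2 := integral_le_left ha hanti hs0 hs.2
      have h3 : a s ≤ a 0 := hanti (Set.mem_Ici.2 le_rfl) hs0 hs0
      have h4 : ((n + 1) * h - s) * a s ≤ h * a 0 :=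
        mul_le_mul (by linarith [hs.1]) h3 (hpos s hs0).le hh.le
      rw [← mul_assoc, ← Real.exp_add, ← Real.exp_add]
      exact le_mul_of_one_le_left (hg0 s hs0) (Real.one_le_exp (by linarith))
    rw [Finset.sum_range_succ (fun i => Real.exp (h * ∑ j ∈ Finset.range (i + 1), a (j * h)) * D i)]
    push_cast
    rw [← hsplit, mul_add, mul_add, ← mul_assoc (Real.exp _) (Real.exp _) (D n), ← Real.exp_add,
      neg_add_cancel, Real.exp_zero, one_mul]
    refine add_le_add ?_ hDn
    have hexp : Real.exp (-(h * ∑ i ∈ Finset.range (n + 1), a (i * h))) =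
        Real.exp (-(h * a (n * h))) * Real.exp (-(h * ∑ i ∈ Finset.range n, a (i * h))) := by
      rw [← Real.exp_add, Finset.sum_range_succ]
      ring_nf
    have hexp' : Real.exp (-(∫ s in (0 : ℝ)..((n + 1) * h), a s)) =
        Real.exp (-(∫ s in ((n : ℝ) * h)..((n + 1) * h), a s)) *
          Real.exp (-(∫ s in (0 : ℝ)..(n * h), a s)) := by
      rw [← Real.exp_add, ← hphi]
      ring_nf
    rw [hexp, hexp', mul_assoc]
    refine (mul_le_mul_of_nonneg_left ih (Real.exp_pos _).le).trans ?_
    refine (mul_le_mul_of_nonneg_right (Real.exp_le_exp.2 (neg_le_neg hstep))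
      (by positivity)).trans (le_of_eq (by ring))

/-- Discrete-to-continuous comparison for the weighted sums
`e^{-φ_{n-1}} Σ_{i=0}^{n-1} e^{φ_i} (a_i - a_{i+1})` (and the version divided by `a_i`)
with `φ_n = h Σ_{i=0}^n a_i` and `φ(t) = ∫₀ᵗ a(s) ds`, under the standing
assumptions on the regularizing function `a(t)`. -/
theorem discrete_sum_le_integral
    (a a' : ℝ → ℝ)
    (ha_deriv : ∀ t : ℝ, 0 ≤ t → HasDerivAt a (a' t) t)
    (ha'_cont : ContinuousOn a' (Set.Ici (0 : ℝ)))
    (ha_pos : ∀ t : ℝ, 0 ≤ t → 0 < a t)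
    (ha_anti : StrictAntiOn a (Set.Ici (0 : ℝ)))
    (ha_lim : Tendsto a atTop (nhds 0))
    (hν_anti : AntitoneOn (fun t => |a' t| / (a t) ^ 2) (Set.Ici (0 : ℝ)))
    (hν_lim : Tendsto (fun t => |a' t| / (a t) ^ 2) atTop (nhds 0))
    (h : ℝ) (hh : 0 < h) :
    ∀ n : ℕ, 1 ≤ n →
      (Real.exp (-(h * ∑ i ∈ Finset.range n, a (i * h))) *
          ∑ i ∈ Finset.range n,
            Real.exp (h * ∑ j ∈ Finset.range (i + 1), a (j * h)) *
              (a (i * h) - a ((i + 1) * h))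
        ≤ Real.exp (a 0 * h) * Real.exp (-(∫ s in (0 : ℝ)..(n * h), a s)) *
            ∫ s in (0 : ℝ)..(n * h), Real.exp (∫ x in (0 : ℝ)..s, a x) * |a' s|) ∧
      (Real.exp (-(h * ∑ i ∈ Finset.range n, a (i * h))) *
          ∑ i ∈ Finset.range n,
            Real.exp (h * ∑ j ∈ Finset.range (i + 1), a (j * h)) *
              ((a (i * h) - a ((i + 1) * h)) / a (i * h))
        ≤ Real.exp (a 0 * h) * Real.exp (-(∫ s in (0 : ℝ)..(n * h), a s)) *
            ∫ s in (0 : ℝ)..(n * h), Real.exp (∫ x in (0 : ℝ)..s, a x) * (|a' s| / a s)) := by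
  intro n _
  have ha : ContinuousOn a (Set.Ici 0) := fun t ht =>
    (ha_deriv t ht).continuousAt.continuousWithinAt
  have hftc : ∀ i : ℕ, a (i * h) - a ((i + 1) * h) = ∫ s in (i * h)..((i + 1) * h), -a' s := by
    intro i
    have hi : (0 : ℝ) ≤ i * h := by positivity
    have hi2 : (0 : ℝ) ≤ (i + 1) * h := by positivity
    rw [intervalIntegral.integral_neg, intervalIntegral.integral_eq_sub_of_hasDerivAt
      (fun t ht => ha_deriv t ((le_min hi hi2).trans ht.1))
      (integrable_of_contOn_Ici ha'_cont hi hi2)]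
    ring
  have hquot : ContinuousOn (fun s => |a' s| / a s) (Set.Ici 0) :=
    ha'_cont.abs.div ha fun t ht => (ha_pos t ht).ne'
  constructor
  · refine discrete_le_continuous (D := fun i => a (i * h) - a ((i + 1) * h)) hh ha
      ha_anti.antitoneOn ha_pos ha'_cont.abs (fun t _ => abs_nonneg _) (fun i => ?_) n
    have hi : (0 : ℝ) ≤ i * h := by positivity
    have hi2 : (0 : ℝ) ≤ (i + 1) * h := by positivity
    simp only [hftc]
    exact intervalIntegral.integral_mono_on (by nlinarith)
      (integrable_of_contOn_Ici ha'_cont.neg hi hi2)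
      (integrable_of_contOn_Ici ha'_cont.abs hi hi2) fun s _ => neg_le_abs _
  · refine discrete_le_continuous (D := fun i => (a (i * h) - a ((i + 1) * h)) / a (i * h)) hh ha
      ha_anti.antitoneOn ha_pos hquot
      (fun t ht => div_nonneg (abs_nonneg _) (ha_pos t ht).le) (fun i => ?_) n
    have hi : (0 : ℝ) ≤ i * h := by positivity
    have hi2 : (0 : ℝ) ≤ (i + 1) * h := by positivity
    simp only [hftc]
    rw [← intervalIntegral.integral_div]
    refine intervalIntegral.integral_mono_on (by nlinarith)
      ((integrable_of_contOn_Ici ha'_cont.neg hi hi2).div_const _)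
      (integrable_of_contOn_Ici hquot hi hi2) fun s hs => ?_
    have hs0 : 0 ≤ s := hi.trans hs.1
    exact div_le_div₀ (abs_nonneg _) (neg_le_abs _) (ha_pos s hs0)
      (ha_anti.antitoneOn hi hs0 hs.1)
end

section
/- Let a : [0,∞) → (0,∞) be continuously differentiable, strictly decreasing with a(t) → 0 as t → ∞, and such that ν(t) := |a′(t)|/a(t)² is decreasing with ν(t) → 0 as t → ∞. Let h > 0, a_n := a(nh), and φ_n := h Σ_{i=0}^{n} a_i. Then e^{φ_{n−1}}·a_n → ∞ as n → ∞. -/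
/-!
Since `(1 / a)' = |a'| / a ^ 2 = ν → 0`, eventually `1 / a` grows with slope at most `1 / 2`, so
`1 / a_{n+1} ≤ 1 / a_n + h / 2`, that is `a_n ≤ a_{n+1} (1 + h a_n / 2) ≤ a_{n+1} e^{h a_n / 2}`.
Hence `w_n = e^{φ_{n-1} / 2} a_n` is eventually nondecreasing and so bounded below by some `c > 0`.
Then `e^{φ_{n-1}} a_n = w_n ^ 2 / a_n ≥ c ^ 2 / a_n → ∞`, because `a_n → 0⁺`.
-/

open Filter Finset

/-- If `|a'| / a ^ 2 ≤ 1 / 2` on `[s, ∞)`, the mean value theorem for `1 / a` gives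
`1 / a (s + h) ≤ 1 / a s + h / 2`, rearranged here and combined with `1 + x ≤ exp x`. -/
lemma le_mul_exp_of_ratio_le {a a' : ℝ → ℝ} {s h : ℝ} (hh : 0 < h)
    (ha_deriv : ∀ t, s ≤ t → HasDerivAt a (a' t) t) (ha_pos : ∀ t, s ≤ t → 0 < a t)
    (hν : ∀ t, s ≤ t → |a' t| / (a t) ^ 2 ≤ 1 / 2) :
    a s ≤ a (s + h) * Real.exp (h * a s / 2) := by
  have hd : ∀ t, s ≤ t → HasDerivAt (fun x => (a x)⁻¹) (-a' t / (a t) ^ 2) t := fun t ht =>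
    (ha_deriv t ht).fun_inv (ha_pos t ht).ne'
  obtain ⟨c, hc, hceq⟩ := exists_hasDerivAt_eq_slope (fun x => (a x)⁻¹) _
    (lt_add_of_pos_right s hh)
    (fun t ht => (hd t ht.1).continuousAt.continuousWithinAt) (fun t ht => hd t ht.1.le)
  have hb : -a' c / (a c) ^ 2 ≤ 1 / 2 :=
    (div_le_div_of_nonneg_right (neg_le_abs _) (sq_nonneg _)).trans (hν c hc.1.le)
  rw [hceq, add_sub_cancel_left, div_le_iff₀ hh] at hb
  have h0 := ha_pos s le_rfl
  have h1 := ha_pos (s + h) (by linarith)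
  have h2 : a s ≤ a (s + h) * (h * a s / 2 + 1) := by
    have h3 := mul_le_mul_of_nonneg_left hb (mul_pos h0 h1).le
    have h4 : a s * a (s + h) * ((a (s + h))⁻¹ - (a s)⁻¹) = a s - a (s + h) := by
      field_simp
    linarith
  exact h2.trans (mul_le_mul_of_nonneg_left (Real.add_one_le_exp _) h1.le)

/-- `e^{φ_{n-1}} a_n → ∞` as `n → ∞`, where `a_n = a(nh)` and
`φ_n = h Σ_{i=0}^n a_i`, under the standing assumptions on the regularizing
function `a(t)`. (Stated with the index shift `n ↦ n+1`.) -/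
theorem exp_phi_mul_a_tendsto_atTop
    (a a' : ℝ → ℝ)
    (ha_deriv : ∀ t : ℝ, 0 ≤ t → HasDerivAt a (a' t) t)
    (ha'_cont : ContinuousOn a' (Set.Ici (0 : ℝ)))
    (ha_pos : ∀ t : ℝ, 0 ≤ t → 0 < a t)
    (ha_anti : StrictAntiOn a (Set.Ici (0 : ℝ)))
    (ha_lim : Tendsto a atTop (nhds 0))
    (hν_anti : AntitoneOn (fun t => |a' t| / (a t) ^ 2) (Set.Ici (0 : ℝ)))
    (hν_lim : Tendsto (fun t => |a' t| / (a t) ^ 2) atTop (nhds 0))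
    (h : ℝ) (hh : 0 < h) :
    Tendsto (fun n : ℕ =>
        Real.exp (h * ∑ i ∈ Finset.range (n + 1), a (i * h)) * a ((n + 1) * h))
      atTop atTop := by
  obtain ⟨T, hT⟩ := eventually_atTop.1 (hν_lim.eventually_le_const (by norm_num : (0 : ℝ) < 1 / 2))
  obtain ⟨N, hN⟩ := exists_nat_ge (T / h)
  rw [div_le_iff₀ hh] at hN
  have hpos : ∀ n : ℕ, 0 < a (n * h) := fun n => ha_pos _ (by positivity)
  have hstep : ∀ n ≥ N, a (n * h) ≤ a ((n + 1 : ℕ) * h) * Real.exp (h * a (n * h) / 2) := by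
    intro n hn
    have hTn : T ≤ n * h := hN.trans (by gcongr)
    have h0 : 0 ≤ (n : ℝ) * h := by positivity
    have := le_mul_exp_of_ratio_le hh (fun t ht => ha_deriv t (h0.trans ht))
      (fun t ht => ha_pos t (h0.trans ht)) (fun t ht => hT t (hTn.trans ht))
    rwa [show ((n + 1 : ℕ) : ℝ) * h = n * h + h by push_cast; ring]
  let w : ℕ → ℝ := fun n => Real.exp (h * (∑ i ∈ Finset.range n, a (i * h)) / 2) * a (n * h)
  have hw : ∀ n ≥ N, w N ≤ w n := by
    intro n hn
    induction n, hn using Nat.le_induction with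
    | base => exact le_rfl
    | succ n hn ih =>
      refine ih.trans ?_
      have h1 := mul_le_mul_of_nonneg_left (hstep n hn)
        (Real.exp_pos (h * (∑ i ∈ Finset.range n, a (i * h)) / 2)).le
      refine h1.trans_eq ?_
      simp only [w]
      rw [Finset.sum_range_succ, mul_add, add_div, Real.exp_add]
      ring
  have hw0 : 0 < w N := mul_pos (Real.exp_pos _) (hpos N)
  have hinv : Tendsto (fun n : ℕ => w N ^ 2 * (a (n * h))⁻¹) atTop atTop := by
    refine Tendsto.const_mul_atTop (by positivity) (Tendsto.inv_tendsto_nhdsGT_zero ?_)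
    refine tendsto_nhdsWithin_iff.2 ⟨?_, Eventually.of_forall hpos⟩
    exact ha_lim.comp (tendsto_natCast_atTop_atTop.atTop_mul_const hh)
  have key : Tendsto (fun n : ℕ =>
      Real.exp (h * ∑ i ∈ Finset.range n, a (i * h)) * a (n * h)) atTop atTop := by
    refine tendsto_atTop_mono' _ ?_ hinv
    filter_upwards [eventually_ge_atTop N] with n hn
    have hsq : Real.exp (h * ∑ i ∈ Finset.range n, a (i * h)) * a (n * h)
        = w n ^ 2 * (a (n * h))⁻¹ := by
      have hne := (hpos n).ne'
      simp only [w]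
      rw [mul_pow, ← Real.exp_nat_mul]
      push_cast
      rw [mul_div_cancel₀ _ (two_ne_zero' ℝ)]
      field_simp
    rw [hsq]
    exact mul_le_mul_of_nonneg_right (pow_le_pow_left₀ hw0.le (hw n hn) 2)
      (inv_nonneg.2 (hpos n).le)
  have hshift := key.comp (tendsto_add_atTop_nat 1)
  simpa [Function.comp_def] using hshift
end

section
/- Let a : [0,∞) → (0,∞) be continuously differentiable, strictly decreasing with a(t) → 0 as t → ∞, and such that ν(t) := |a′(t)|/a(t)² is decreasing with ν(t) → 0 as t → ∞. Let h > 0, a_n := a(nh), and φ_n := h Σ_{i=0}^{n} a_i. Then (Σ_{i=0}^{n} e^{φ_i}(a_i − a_{i+1})) / (e^{φ_n} a_{n+1}) → 0 as n → ∞. -/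
/-!
Write `b n = a ((n+1)h)`, `d n = 1 / b (n+1) - 1 / b n`, and let `R n` be the ratio in question.
Peeling off the last summand gives
`R (n+1) = exp (-h * b n) * (b n / b (n+1)) * R n + (b n / b (n+1) - 1)`,
where `b n / b (n+1) = 1 + b n * d n`. By the mean value theorem applied to `1 / a`, `d n` is `h`
times a value of `|a'| / a ^ 2`, so `d n → 0` (`inv_sub_inv_tendsto_zero`).
Since `exp (-h * b n) ≤ 1 / (1 + h * b n)`, for small `d n` the recursion becomes
`R (n+1) ≤ (1 - κ * b n) * R n + b n * d n` with a fixed `κ > 0`.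

When `d n ≤ κ`, also `(1 - κ * b n) * b n ≤ b (n+1)`, so for every `ε > 0` a bound of the form
`R n ≤ ε + C * b n` propagates from `n` to `n+1`. As `b n → 0`, this forces `R n → 0`
(`tendsto_zero_of_recursion`).
-/

open Filter Finset

/-- One step of the recursion, with `b`, `b₁` consecutive terms, preserves the bound
`R ≤ ε + C * b` as soon as `d = 1 / b₁ - 1 / b` is small. -/
lemma recursion_step {h B κ ε C b b₁ d R : ℝ} (hh : 0 < h) (hκ : 0 < κ)
    (hκB : κ * (1 + h * B) ≤ h / 2) (hC : 0 ≤ C) (hε : 0 < ε) (hb : 0 < b) (hb₁ : 0 < b₁)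
    (hbB : b ≤ B) (hd0 : 0 ≤ d) (hd : b = b₁ * (1 + b * d))
    (hd1 : d ≤ h / 2) (hd2 : d ≤ κ) (hd3 : d ≤ κ * ε) (hR : R ≤ ε + C * b) :
    Real.exp (-(h * b)) * (b / b₁) * R + (b / b₁ - 1) ≤ ε + C * b₁ := by
  have hq : b / b₁ = 1 + b * d := by
    rw [div_eq_iff hb₁.ne']; linarith
  have hbd : 0 ≤ b * d := by positivity
  rw [hq]
  have hF0 : 0 ≤ Real.exp (-(h * b)) * (1 + b * d) := by positivity
  have hF : Real.exp (-(h * b)) * (1 + b * d) ≤ 1 - κ * b := by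
    have h1 : 1 + h * b ≤ Real.exp (h * b) := by linarith [Real.add_one_le_exp (h * b)]
    have hpos : 0 < 1 + h * b := by positivity
    rw [Real.exp_neg]
    have h2 : (Real.exp (h * b))⁻¹ ≤ (1 + h * b)⁻¹ := inv_anti₀ hpos h1
    calc _ ≤ (1 + h * b)⁻¹ * (1 + b * d) := by gcongr
      _ ≤ 1 - κ * b := by
        rw [inv_mul_le_iff₀ hpos]
        have h3 : κ * (1 + h * b) ≤ h / 2 := le_trans (by gcongr) hκB
        have h4 := mul_le_mul_of_nonneg_left h3 hb.le
        have h5 := mul_le_mul_of_nonneg_left hd1 hb.le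
        linarith
  have hb₁' : (1 - κ * b) * b ≤ b₁ := by
    have hk : 0 ≤ 1 - κ * b := hF0.trans hF
    have h1 : b ≤ b₁ * (1 + κ * b) := by
      calc b = b₁ * (1 + b * d) := hd
        _ ≤ b₁ * (1 + b * κ) := by gcongr
        _ = _ := by ring
    have h2 := mul_le_mul_of_nonneg_left h1 hk
    have h3 : 0 ≤ b₁ * (κ * b) ^ 2 := by positivity
    linarith
  have h1 := mul_le_mul_of_nonneg_left hR hF0
  have h2 := mul_le_mul_of_nonneg_right hF (show 0 ≤ ε + C * b by positivity)
  have h3 := mul_le_mul_of_nonneg_left hb₁' hC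
  have h4 := mul_le_mul_of_nonneg_left hd3 hb.le
  linarith

lemma tendsto_zero_of_recursion {h : ℝ} (hh : 0 < h) {b R : ℕ → ℝ} (hb : ∀ n, 0 < b n)
    (hanti : Antitone b) (hlim : Tendsto b atTop (nhds 0))
    (hd : Tendsto (fun n => (b (n + 1))⁻¹ - (b n)⁻¹) atTop (nhds 0)) (hR0 : ∀ n, 0 ≤ R n)
    (hR : ∀ n, R (n + 1) =
      Real.exp (-(h * b n)) * (b n / b (n + 1)) * R n + (b n / b (n + 1) - 1)) :
    Tendsto R atTop (nhds 0) := by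
  have hB := hb 0
  obtain ⟨κ, hκdef⟩ : ∃ κ, κ = h / 2 / (1 + h * b 0) := ⟨_, rfl⟩
  have hκ : 0 < κ := by rw [hκdef]; positivity
  have hκB : κ * (1 + h * b 0) ≤ h / 2 := by
    rw [hκdef, div_mul_cancel₀]; positivity
  refine tendsto_order.2 ⟨fun x hx => Eventually.of_forall fun n => hx.trans_le (hR0 n), ?_⟩
  intro δ hδ
  have hε : 0 < δ / 2 := by positivity
  obtain ⟨N, hN⟩ := eventually_atTop.1
    ((hd.eventually (gt_mem_nhds (half_pos hh))).and
      ((hd.eventually (gt_mem_nhds hκ)).and (hd.eventually (gt_mem_nhds (mul_pos hκ hε)))))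
  have hC : 0 ≤ R N / b N := div_nonneg (hR0 N) (hb N).le
  have key : ∀ n, N ≤ n → R n ≤ δ / 2 + R N / b N * b n := by
    intro n hn
    induction n, hn using Nat.le_induction with
    | base => rw [div_mul_cancel₀ _ (hb N).ne']; linarith
    | succ n hn ih =>
      rw [hR n]
      obtain ⟨h1, h2, h3⟩ := hN n hn
      refine recursion_step hh hκ hκB hC hε (hb n) (hb _) (hanti (Nat.zero_le n)) ?_ ?_
        h1.le h2.le h3.le ih
      · exact sub_nonneg.2 (inv_anti₀ (hb _) (hanti (Nat.le_succ n)))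
      · have := (hb n).ne'
        have := (hb (n + 1)).ne'
        field_simp
        ring
  have hl : Tendsto (fun n => δ / 2 + R N / b N * b n) atTop (nhds (δ / 2)) := by
    simpa using (hlim.const_mul (R N / b N)).const_add (δ / 2)
  filter_upwards [hl.eventually (gt_mem_nhds (half_lt_self hδ)), eventually_ge_atTop N]
    with n h1 h2
  exact (key n h2).trans_lt h1

lemma inv_sub_inv_tendsto_zero {a a' : ℝ → ℝ}
    (ha_deriv : ∀ t : ℝ, 0 ≤ t → HasDerivAt a (a' t) t)
    (ha_pos : ∀ t : ℝ, 0 ≤ t → 0 < a t)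
    (hν_lim : Tendsto (fun t => |a' t| / (a t) ^ 2) atTop (nhds 0)) {h : ℝ} (hh : 0 < h) :
    Tendsto (fun t => (a (t + h))⁻¹ - (a t)⁻¹) atTop (nhds 0) := by
  rw [Metric.tendsto_atTop]
  intro ε hε
  obtain ⟨T, hT⟩ := Metric.tendsto_atTop.1 hν_lim (ε / h) (by positivity)
  refine ⟨max T 0, fun t ht => ?_⟩
  have htT : T ≤ t := (le_max_left _ _).trans ht
  have ht0 : 0 ≤ t := (le_max_right _ _).trans ht
  have hder : ∀ x, t ≤ x → HasDerivAt (fun s => (a s)⁻¹) (-a' x / a x ^ 2) x := fun x hx =>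
    (ha_deriv x (ht0.trans hx)).fun_inv (ha_pos x (ht0.trans hx)).ne'
  obtain ⟨c, hc, hceq⟩ := exists_hasDerivAt_eq_slope (fun s => (a s)⁻¹)
    (fun x => -a' x / a x ^ 2) (show t < t + h by linarith)
    (fun x hx => (hder x hx.1).continuousAt.continuousWithinAt) (fun x hx => hder x hx.1.le)
  have h1 := hT c (htT.trans hc.1.le)
  rw [add_sub_cancel_left, eq_div_iff hh.ne'] at hceq
  rw [Real.dist_eq, sub_zero] at h1 ⊢
  rw [← hceq, abs_mul, abs_of_pos hh, ← lt_div_iff₀ hh]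
  rwa [abs_div, abs_abs, ← abs_neg (a' c), ← abs_div] at h1

/-- `(Σ_{i=0}^n e^{φ_i}(a_i - a_{i+1})) / (e^{φ_n} a_{n+1}) → 0` as `n → ∞`,
where `a_n = a(nh)` and `φ_n = h Σ_{i=0}^n a_i`, under the standing assumptions
on the regularizing function `a(t)`. -/
theorem weighted_sum_ratio_tendsto_zero
    (a a' : ℝ → ℝ)
    (ha_deriv : ∀ t : ℝ, 0 ≤ t → HasDerivAt a (a' t) t)
    (ha'_cont : ContinuousOn a' (Set.Ici (0 : ℝ)))
    (ha_pos : ∀ t : ℝ, 0 ≤ t → 0 < a t)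
    (ha_anti : StrictAntiOn a (Set.Ici (0 : ℝ)))
    (ha_lim : Tendsto a atTop (nhds 0))
    (hν_anti : AntitoneOn (fun t => |a' t| / (a t) ^ 2) (Set.Ici (0 : ℝ)))
    (hν_lim : Tendsto (fun t => |a' t| / (a t) ^ 2) atTop (nhds 0))
    (h : ℝ) (hh : 0 < h) :
    Tendsto (fun n : ℕ =>
        (∑ i ∈ Finset.range (n + 1),
            Real.exp (h * ∑ j ∈ Finset.range (i + 1), a (j * h)) *
              (a (i * h) - a ((i + 1) * h))) /
          (Real.exp (h * ∑ i ∈ Finset.range (n + 1), a (i * h)) * a ((n + 1) * h)))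
      atTop (nhds 0) := by
  have hpos' : ∀ n : ℕ, 0 < a ((n + 1) * h) := fun n => ha_pos _ (by positivity)
  have hanti : ∀ {s t : ℝ}, 0 ≤ s → s ≤ t → a t ≤ a s := fun hs hst =>
    ha_anti.antitoneOn (Set.mem_Ici.2 hs) (Set.mem_Ici.2 (hs.trans hst)) hst
  have htop : Tendsto (fun n : ℕ => ((n : ℝ) + 1) * h) atTop atTop :=
    (tendsto_atTop_add_const_right _ _ tendsto_natCast_atTop_atTop).atTop_mul_const hh
  refine tendsto_zero_of_recursion (b := fun n : ℕ => a ((n + 1) * h)) hh hpos' ?_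
    (ha_lim.comp htop) ?_ ?_ ?_
  · intro m n hmn
    exact hanti (by positivity) (by gcongr)
  · refine ((inv_sub_inv_tendsto_zero ha_deriv ha_pos hν_lim hh).comp htop).congr fun n => ?_
    simp only [Function.comp, Nat.cast_add, Nat.cast_one]
    rw [show ((n : ℝ) + 1) * h + h = (n + 1 + 1) * h by ring]
  · intro n
    refine div_nonneg (sum_nonneg fun i _ => mul_nonneg (Real.exp_pos _).le ?_)
      (mul_pos (Real.exp_pos _) (hpos' n)).le
    exact sub_nonneg.2 (hanti (by positivity) (by gcongr; linarith))
  · intro n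
    rw [sum_range_succ _ (n + 1), sum_range_succ (fun i : ℕ => a (i * h)) (n + 1), mul_add,
      Real.exp_add, Real.exp_neg]
    have h1 := (hpos' n).ne'
    have h2 := (hpos' (n + 1)).ne'
    push_cast at h2 ⊢
    generalize (∑ i ∈ range (n + 1), Real.exp (h * ∑ j ∈ range (i + 1), a (j * h)) *
      (a (i * h) - a ((i + 1) * h))) = S
    have h3 := (Real.exp_pos (h * ∑ i ∈ range (n + 1), a (i * h))).ne'
    have h4 := (Real.exp_pos (h * a ((n + 1) * h))).ne'
    generalize Real.exp (h * ∑ i ∈ range (n + 1), a (i * h)) = E at *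
    generalize Real.exp (h * a ((n + 1) * h)) = F at *
    generalize a (((n : ℝ) + 1 + 1) * h) = y at *
    generalize a (((n : ℝ) + 1) * h) = x at *
    field_simp
end

section
/- Let H be a real Hilbert space and F : H → H a continuous, locally σ-inverse monotone operator (for each R > 0 there is σ_R > 0 with ⟨F(u) − F(v), u − v⟩ ≥ σ_R‖F(u) − F(v)‖² on B(0,R)). Assume the equation F(u) = f is solvable, let 0 < δ < 1 and f_δ ∈ H with ‖f_δ − f‖ ≤ δ, and let constants C > 0, ζ ∈ (0,1] satisfy C·δ^ζ > δ. Let a : [0,∞) → (0,∞) be continuously differentiable, strictly decreasing with a(t) → 0 as t → ∞, and such that ν(t) := |a′(t)|/a(t)² is decreasing with ν(t) → 0 as t → ∞; set a_n := a(nh). Let u_0 ∈ H satisfy ‖F(u_0) − f_δ‖ > C·δ^ζ. Then there exists R > 0 such that whenever 0 < h ≤ 1 and the step sizes (γ_n) satisfy 0 < h ≤ γ_n ≤ 2/(σ_R⁻¹ + 2a_n) for all n ≥ 0, the iterates defined by u_{n+1} = u_n − γ_n·(F(u_n) + a_n·u_n − f_δ) admit a unique integer n_δ ≥ 1 with ‖F(u_{n_δ})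 − f_δ‖ ≤ C·δ^ζ and ‖F(u_n) − f_δ‖ > C·δ^ζ for all 0 ≤ n < n_δ. -/
open scoped RealInnerProductSpace
open Filter Finset

/-!
Write `a_n = a (n h)`, `g_n = F u_n + a_n u_n - f_δ`, `κ = C δ ^ ζ > δ`, and let `F y = f`.

On a ball of radius `R` the step-size condition makes `u ↦ u - γ_n (F u + a_n u)` a contraction with
factor `1 - γ_n a_n` (`norm_step_le`). Two estimates follow, valid as long as the iterates stay in
the ball:

* comparing `u_n` with `y`, `‖u_n - y‖ ≤ M' + δ / a_n` where `M' = ‖u_0 - y‖ + ‖y‖`, which gives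
  `a_n ‖u_n‖ ≤ δ + M a_n` with `M = M' + ‖y‖` (`error_step`);
* comparing `u_{n+1}` with `u_n`, `‖g_{n+1}‖ ≤ (1 - h a_n) ‖g_n‖ + h a_n ν(n h) K` with
  `K = M a_0 + δ` (`residual_step`).

The second recursion keeps `‖g_n‖` below a constant `G`; once `ν ≤ 1` and `ν K ≤ ε`, it also
preserves the bound `‖g_n‖ ≤ ε + L a_n`, because `a_n (1 - h a_n) ≤ a_{n+1}`. Hence
`‖F u_n - f_δ‖ ≤ ‖g_n‖ + a_n ‖u_n‖ ≤ δ + ε + (L + M) a_n`, which is at most `κ` for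
`ε = (κ - δ) / 2` as soon as `n h ≥ T₂` for a suitable `T₂`.

No constant in these estimates involves `σ_R` or `R`, so `T₂` can be fixed before `R`. Since `h ≤ 1`,
the first `n` with `n h ≥ T₂` satisfies `n h ≤ T₂ + 1`, so it suffices that `R` be at least
`‖y‖ + M' + δ / a (T₂ + 1)`.
-/

/-- With `d = u - v` and `D = F u - F v`, this is the contraction property of one step of the
scheme. -/
lemma norm_step_le {H : Type*} [NormedAddCommGroup H] [InnerProductSpace ℝ H]
    (d D : H) {σ γ α : ℝ} (hσ : 0 < σ) (hγ : 0 < γ) (hα : 0 < α)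
    (hmono : σ * ‖D‖ ^ 2 ≤ ⟪D, d⟫) (hγle : γ ≤ 2 / (σ⁻¹ + 2 * α)) :
    0 ≤ 1 - γ * α ∧ ‖d - γ • (D + α • d)‖ ≤ (1 - γ * α) * ‖d‖ := by
  have hσi : 0 < σ⁻¹ := inv_pos.mpr hσ
  rw [le_div_iff₀ (by positivity)] at hγle
  have h1 : γ ≤ 2 * σ * (1 - γ * α) := by
    have : σ * (γ * (σ⁻¹ + 2 * α)) ≤ σ * 2 := mul_le_mul_of_nonneg_left hγle hσ.le
    have e : σ * (γ * (σ⁻¹ + 2 * α)) = γ + 2 * σ * γ * α := by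
      field_simp
    linarith
  have h2 : 0 ≤ 1 - γ * α := by
    by_contra hc
    push Not at hc
    nlinarith
  refine ⟨h2, ?_⟩
  have e : d - γ • (D + α • d) = (1 - γ * α) • d - γ • D := by
    module
  have hsq : ‖d - γ • (D + α • d)‖ ^ 2 ≤ ((1 - γ * α) * ‖d‖) ^ 2 := by
    rw [e, norm_sub_sq_real, norm_smul, norm_smul, real_inner_smul_left, real_inner_smul_right,
      real_inner_comm, Real.norm_of_nonneg h2, Real.norm_of_nonneg hγ.le]
    have h3 : γ * (1 - γ * α) * (σ * ‖D‖ ^ 2) ≤ γ * (1 - γ * α) * ⟪D, d⟫ :=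
      mul_le_mul_of_nonneg_left hmono (by positivity)
    have h4 : γ * ‖D‖ ^ 2 * γ ≤ γ * ‖D‖ ^ 2 * (2 * σ * (1 - γ * α)) :=
      mul_le_mul_of_nonneg_left h1 (by positivity)
    nlinarith
  exact le_of_sq_le_sq hsq (by positivity)

/-- The decrement of `a` over `[s, t]` is controlled by the value of `ν = |a'| / a ^ 2` at `s`. -/
lemma decrement_le (a a' : ℝ → ℝ)
    (ha_deriv : ∀ t : ℝ, 0 ≤ t → HasDerivAt a (a' t) t)
    (ha_pos : ∀ t : ℝ, 0 ≤ t → 0 < a t)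
    (ha_anti : StrictAntiOn a (Set.Ici (0 : ℝ)))
    (hν_anti : AntitoneOn (fun t => |a' t| / (a t) ^ 2) (Set.Ici (0 : ℝ)))
    {s t : ℝ} (hs : 0 ≤ s) (hst : s < t) :
    a s - a t ≤ (t - s) * (|a' s| / (a s) ^ 2) * (a s) ^ 2 := by
  obtain ⟨x, hx, hxe⟩ := exists_hasDerivAt_eq_slope a a' hst
    (fun z hz => (ha_deriv z (hs.trans hz.1)).continuousAt.continuousWithinAt)
    (fun z hz => ha_deriv z (hs.trans hz.1.le))
  have hx0 : 0 ≤ x := hs.trans hx.1.le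
  have hts : 0 < t - s := by linarith
  have h1 : a s - a t = (t - s) * (-a' x) := by
    rw [hxe]
    field_simp
    ring
  have hν := hν_anti (Set.mem_Ici.2 hs) (Set.mem_Ici.2 hx0) hx.1.le
  have hax : a x ≤ a s := (ha_anti (Set.mem_Ici.2 hs) (Set.mem_Ici.2 hx0) hx.1).le
  have hpx := ha_pos x hx0
  have h2 : |a' x| = |a' x| / (a x) ^ 2 * (a x) ^ 2 := by
    field_simp
  have h3 : |a' x| / (a x) ^ 2 * (a x) ^ 2 ≤ |a' s| / (a s) ^ 2 * (a s) ^ 2 := by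
    gcongr
  rw [h1, mul_assoc]
  refine mul_le_mul_of_nonneg_left ?_ hts.le
  exact (neg_le_abs _).trans (h2.le.trans h3)

/-- Growth of the error `‖u_n - y‖` in one step: the bound `M' + δ / α` is preserved. -/
lemma error_step {H : Type*} [NormedAddCommGroup H] [InnerProductSpace ℝ H]
    (F : H → H) {σ γ α δ M' : ℝ} (hσ : 0 < σ) (hγ : 0 < γ) (hα : 0 < α)
    (hγle : γ ≤ 2 / (σ⁻¹ + 2 * α)) (u y fδ : H)
    (hmono : σ * ‖F u - F y‖ ^ 2 ≤ ⟪F u - F y, u - y⟫)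
    (hfδ : ‖fδ - F y‖ ≤ δ) (hM : ‖y‖ ≤ M') (hu : ‖u - y‖ ≤ M' + δ / α) :
    ‖u - γ • (F u + α • u - fδ) - y‖ ≤ M' + δ / α := by
  obtain ⟨h0, h1⟩ := norm_step_le (u - y) (F u - F y) hσ hγ hα hmono hγle
  have e : u - γ • (F u + α • u - fδ) - y =
      ((u - y) - γ • ((F u - F y) + α • (u - y))) + γ • ((fδ - F y) - α • y) := by
    module
  have h2 : ‖γ • ((fδ - F y) - α • y)‖ ≤ γ * (δ + α * M') := by
    rw [norm_smul, Real.norm_of_nonneg hγ.le]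
    refine mul_le_mul_of_nonneg_left ((norm_sub_le _ _).trans ?_) hγ.le
    rw [norm_smul, Real.norm_of_nonneg hα.le]
    gcongr
  have h3 : (1 - γ * α) * ‖u - y‖ ≤ (1 - γ * α) * (M' + δ / α) :=
    mul_le_mul_of_nonneg_left hu h0
  have h4 : (1 - γ * α) * (M' + δ / α) + γ * (δ + α * M') = M' + δ / α := by
    field_simp
    ring
  rw [e]
  exact (norm_add_le _ _).trans (by linarith)

/-- Decay of the residual `F u + α u - f_δ` in one step `u ↦ v`, when the regularization parameter
changes from `α` to `β`. -/
lemma residual_step {H : Type*} [NormedAddCommGroup H] [InnerProductSpace ℝ H]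
    (F : H → H) {σ γ α β : ℝ} (hσ : 0 < σ) (hγ : 0 < γ) (hα : 0 < α) (hβ : β ≤ α)
    (hγle : γ ≤ 2 / (σ⁻¹ + 2 * α)) (u v fδ : H)
    (hv : v = u - γ • (F u + α • u - fδ))
    (hmono : σ * ‖F v - F u‖ ^ 2 ≤ ⟪F v - F u, v - u⟫) :
    0 ≤ 1 - γ * α ∧
    ‖F v + β • v - fδ‖ ≤ (1 - γ * α) * ‖F u + α • u - fδ‖ + (α - β) * ‖v‖ := by
  obtain ⟨h0, h1⟩ := norm_step_le (v - u) (F v - F u) hσ hγ hα hmono hγle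
  refine ⟨h0, ?_⟩
  have hd : v - u = -(γ • (F u + α • u - fδ)) := by
    rw [hv]
    abel
  -- Multiplying the new residual (still with parameter `α`) by `-γ` gives the contracted step.
  have e1 : (v - u) - γ • ((F v - F u) + α • (v - u)) = -(γ • (F v + α • v - fδ)) := by
    have : (v - u) - γ • ((F v - F u) + α • (v - u)) =
        ((v - u) + γ • (F u + α • u - fδ)) - γ • (F v + α • v - fδ) := by
      module
    rw [this, hd]
    abel
  rw [e1, hd, norm_neg, norm_neg, norm_smul, norm_smul, Real.norm_of_nonneg hγ.le] at h1
  have h2 : ‖F v + α • v - fδ‖ ≤ (1 - γ * α) * ‖F u + α • u - fδ‖ := by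
    refine le_of_mul_le_mul_left (h1.trans_eq ?_) hγ
    ring
  have e2 : F v + β • v - fδ = (F v + α • v - fδ) - (α - β) • v := by
    module
  rw [e2]
  refine (norm_sub_le _ _).trans ?_
  rw [norm_smul, Real.norm_of_nonneg (sub_nonneg.2 hβ)]
  linarith

/-- Existence and uniqueness of the discrepancy-principle stopping index `n_δ` for
the iterative scheme `u_{n+1} = u_n - γ_n (F u_n + a_n u_n - f_δ)` with a
continuous, locally `σ`-inverse monotone operator `F`. -/
theorem stopping_index_exists_unique
    {H : Type*} [NormedAddCommGroup H] [InnerProductSpace ℝ H] [CompleteSpace H]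
    (F : H → H) (hFc : Continuous F)
    (σc : ℝ → ℝ)
    (hσ : ∀ R : ℝ, 0 < R → 0 < σc R ∧
      ∀ u ∈ Metric.closedBall (0 : H) R, ∀ v ∈ Metric.closedBall (0 : H) R,
        σc R * ‖F u - F v‖ ^ 2 ≤ ⟪F u - F v, u - v⟫)
    (f : H) (hsol : ∃ y : H, F y = f)
    (δ : ℝ) (hδ0 : 0 < δ) (hδ1 : δ < 1)
    (fδ : H) (hfδ : ‖fδ - f‖ ≤ δ)
    (C ζ : ℝ) (hC : 0 < C) (hζ0 : 0 < ζ) (hζ1 : ζ ≤ 1) (hCδ : δ < C * δ ^ ζ)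
    (a a' : ℝ → ℝ)
    (ha_deriv : ∀ t : ℝ, 0 ≤ t → HasDerivAt a (a' t) t)
    (ha'_cont : ContinuousOn a' (Set.Ici (0 : ℝ)))
    (ha_pos : ∀ t : ℝ, 0 ≤ t → 0 < a t)
    (ha_anti : StrictAntiOn a (Set.Ici (0 : ℝ)))
    (ha_lim : Tendsto a atTop (nhds 0))
    (hν_anti : AntitoneOn (fun t => |a' t| / (a t) ^ 2) (Set.Ici (0 : ℝ)))
    (hν_lim : Tendsto (fun t => |a' t| / (a t) ^ 2) atTop (nhds 0))
    (u0 : H) (hu0 : C * δ ^ ζ < ‖F u0 - fδ‖) :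
    ∃ R : ℝ, 0 < R ∧
      ∀ h : ℝ, 0 < h → h ≤ 1 →
        ∀ γ : ℕ → ℝ, (∀ n : ℕ, h ≤ γ n ∧ γ n ≤ 2 / ((σc R)⁻¹ + 2 * a (n * h))) →
          ∀ u : ℕ → H, u 0 = u0 →
            (∀ n : ℕ, u (n + 1) = u n - γ n • (F (u n) + a (n * h) • u n - fδ)) →
            ∃! nδ : ℕ, 1 ≤ nδ ∧ ‖F (u nδ) - fδ‖ ≤ C * δ ^ ζ ∧
              ∀ m : ℕ, m < nδ → C * δ ^ ζ < ‖F (u m) - fδ‖ := by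
  obtain ⟨y, rfl⟩ := hsol
  have hν0 : ∀ t, 0 ≤ |a' t| / (a t) ^ 2 := fun t => by positivity
  have ha_le : ∀ s t : ℝ, 0 ≤ s → s ≤ t → a t ≤ a s := fun s t hs hst =>
    ha_anti.antitoneOn (Set.mem_Ici.2 hs) (Set.mem_Ici.2 (hs.trans hst)) hst
  obtain ⟨κ, hκ⟩ : ∃ κ, κ = C * δ ^ ζ := ⟨_, rfl⟩
  rw [← hκ] at hCδ hu0 ⊢
  obtain ⟨ν, hν⟩ : ∃ ν : ℝ → ℝ, ν = fun t => |a' t| / (a t) ^ 2 := ⟨_, rfl⟩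
  have hdec : ∀ s t : ℝ, 0 ≤ s → s < t → a s - a t ≤ (t - s) * ν s * (a s) ^ 2 := by
    intro s t hs hst
    rw [hν]
    exact decrement_le a a' ha_deriv ha_pos ha_anti hν_anti hs hst
  have hνnn : ∀ t, 0 ≤ ν t := by
    rw [hν]
    exact hν0
  rw [← hν] at hν_anti hν_lim
  obtain ⟨M', hM'⟩ : ∃ M', M' = ‖u0 - y‖ + ‖y‖ := ⟨_, rfl⟩
  have hyM' : ‖y‖ ≤ M' := by rw [hM']; linarith [norm_nonneg (u0 - y)]
  have hM'0 : 0 ≤ M' := (norm_nonneg y).trans hyM'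
  obtain ⟨M, hM⟩ : ∃ M, M = M' + ‖y‖ := ⟨_, rfl⟩
  have hM0 : 0 ≤ M := by rw [hM]; positivity
  have ha0 := ha_pos 0 le_rfl
  obtain ⟨K, hK⟩ : ∃ K, K = M * a 0 + δ := ⟨_, rfl⟩
  have hK0 : 0 < K := by rw [hK]; positivity
  obtain ⟨ε, hε⟩ : ∃ ε, ε = (κ - δ) / 2 := ⟨_, rfl⟩
  have hε0 : 0 < ε := by rw [hε]; linarith
  obtain ⟨G, hG⟩ : ∃ G, G = ‖F u0 + a 0 • u0 - fδ‖ + ν 0 * K := ⟨_, rfl⟩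
  have hGν : ν 0 * K ≤ G := by rw [hG]; linarith [norm_nonneg (F u0 + a 0 • u0 - fδ)]
  have hG0 : 0 ≤ G := (mul_nonneg (hνnn 0) hK0.le).trans hGν
  -- From time `T₁` on, `ν` is small enough for the bound `ε + L a_n` to be self-improving.
  obtain ⟨T₁, hT₁0, hT₁⟩ : ∃ T₁ : ℝ, 0 ≤ T₁ ∧ ∀ t, T₁ ≤ t → ν t ≤ 1 ∧ ν t * K ≤ ε := by
    have hev : ∀ᶠ t in atTop, ν t < min 1 (ε / K) :=
      hν_lim.eventually_lt_const (lt_min one_pos (by positivity))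
    obtain ⟨T, hT⟩ := eventually_atTop.1 hev
    refine ⟨max T 0, le_max_right _ _, fun t ht => ?_⟩
    have := hT t ((le_max_left _ _).trans ht)
    exact ⟨(this.trans_le (min_le_left _ _)).le,
      (le_div_iff₀ hK0).1 (this.trans_le (min_le_right _ _)).le⟩
  have haT := ha_pos (T₁ + 1) (by linarith)
  obtain ⟨L, hL⟩ : ∃ L, L = G / a (T₁ + 1) := ⟨_, rfl⟩
  have hL0 : 0 ≤ L := by rw [hL]; positivity
  -- Before time `T₁ + 1`, the bound by `L a_n` follows from the bound by `G`.
  have hLG : ∀ t, 0 ≤ t → t ≤ T₁ + 1 → G ≤ L * a t := by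
    intro t ht0 ht
    have : L * a (T₁ + 1) = G := by rw [hL]; field_simp
    rw [← this]
    exact mul_le_mul_of_nonneg_left (ha_le _ _ ht0 ht) hL0
  obtain ⟨T₂, hT₂0, hT₂⟩ : ∃ T₂ : ℝ, 0 ≤ T₂ ∧ ∀ t, T₂ ≤ t → (L + M) * a t ≤ ε := by
    have hlim : Tendsto (fun t => (L + M) * a t) atTop (nhds 0) := by
      simpa using ha_lim.const_mul (L + M)
    obtain ⟨T, hT⟩ := eventually_atTop.1 (hlim.eventually_lt_const hε0)
    exact ⟨max T 0, le_max_right _ _, fun t ht => (hT t ((le_max_left _ _).trans ht)).le⟩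
  have haT₂ := ha_pos (T₂ + 1) (by linarith)
  obtain ⟨R, hR⟩ : ∃ R, R = ‖y‖ + (M' + δ / a (T₂ + 1)) := ⟨_, rfl⟩
  have hR0 : 0 < R := by
    have : 0 < δ / a (T₂ + 1) := by positivity
    have := norm_nonneg y
    linarith
  refine ⟨R, hR0, ?_⟩
  intro h hh0 hh1 γ hγ u hu0eq hu
  obtain ⟨hσR, hmono⟩ := hσ R hR0
  have hnh : ∀ n : ℕ, (0 : ℝ) ≤ n * h := fun n => by positivity
  have hball : ∀ (t : ℝ) (w : H), 0 ≤ t → t ≤ T₂ + 1 → ‖w - y‖ ≤ M' + δ / a t →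
      w ∈ Metric.closedBall (0 : H) R := by
    intro t w ht0 ht hw
    rw [mem_closedBall_zero_iff]
    have h1 : δ / a t ≥ 0 := div_nonneg hδ0.le (ha_pos t ht0).le
    have h2 : δ / a t ≤ δ / a (T₂ + 1) :=
      div_le_div_of_nonneg_left hδ0.le haT₂ (ha_le _ _ ht0 ht)
    have h3 : ‖w‖ ≤ ‖y‖ + ‖w - y‖ := by
      simpa using norm_add_le y (w - y)
    linarith
  have hyball : y ∈ Metric.closedBall (0 : H) R := by
    refine hball 0 y le_rfl (by linarith) ?_
    rw [sub_self, norm_zero]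
    positivity
  have key : ∀ n : ℕ, (n : ℝ) * h ≤ T₂ + 1 →
      ‖u n - y‖ ≤ M' + δ / a (n * h) ∧ ‖F (u n) + a (n * h) • u n - fδ‖ ≤ G ∧
      ‖F (u n) + a (n * h) • u n - fδ‖ ≤ ε + L * a (n * h) := by
    intro n
    induction n with
    | zero =>
      intro _
      have hg : ‖F (u 0) + a ((0 : ℕ) * h) • u 0 - fδ‖ ≤ G := by
        rw [hG, hu0eq, Nat.cast_zero, zero_mul]
        linarith [mul_nonneg (hνnn 0) hK0.le]
      refine ⟨?_, hg, ?_⟩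
      · rw [hu0eq, hM']
        have : 0 ≤ δ / a ((0 : ℕ) * h) := div_nonneg hδ0.le (ha_pos _ (hnh 0)).le
        linarith [norm_nonneg y]
      · have := hLG _ (hnh 0) (by simp; linarith)
        linarith
    | succ n ih =>
      intro hn1
      have hstep : ((n + 1 : ℕ) : ℝ) * h = n * h + h := by push_cast; ring
      rw [hstep] at hn1 ⊢
      obtain ⟨ih1, ih2, ih3⟩ := ih (by linarith)
      have hs0 := hnh n
      have hγn := hγ n
      have hun := hu n
      generalize (n : ℝ) * h = s at *
      have hα := ha_pos s hs0
      have hβα : a (s + h) ≤ a s := ha_le _ _ hs0 (by linarith)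
      have hβ := ha_pos (s + h) (by linarith)
      have hγ0 : 0 < γ n := hh0.trans_le hγn.1
      have hubal := hball s (u n) hs0 (by linarith) ih1
      have herr : ‖u (n + 1) - y‖ ≤ M' + δ / a s := by
        rw [hun]
        exact error_step F hσR hγ0 hα hγn.2 (u n) y fδ (hmono _ hubal _ hyball) hfδ hyM' ih1
      have hvbal := hball s (u (n + 1)) hs0 (by linarith) herr
      have hres := residual_step F hσR hγ0 hα hβα hγn.2 (u n) (u (n + 1)) fδ hun
        (hmono _ hvbal _ hubal)
      have hνs : ν s ≤ ν 0 := hν_anti (Set.mem_Ici.2 le_rfl) (Set.mem_Ici.2 hs0) hs0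
      have hνs0 := hνnn s
      have hdecs := hdec s (s + h) hs0 (by linarith)
      rw [add_sub_cancel_left] at hdecs
      have hvnorm : a s * ‖u (n + 1)‖ ≤ K := by
        have h3 : ‖u (n + 1)‖ ≤ ‖y‖ + ‖u (n + 1) - y‖ := by
          simpa using norm_add_le y (u (n + 1) - y)
        have h4 : a s * ‖u (n + 1)‖ ≤ a s * (M + δ / a s) :=
          mul_le_mul_of_nonneg_left (by linarith) hα.le
        have h5 : a s * (M + δ / a s) = M * a s + δ := by field_simp
        have h6 : M * a s ≤ M * a 0 := mul_le_mul_of_nonneg_left (ha_le _ _ le_rfl hs0) hM0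
        linarith
      have hdrift : (a s - a (s + h)) * ‖u (n + 1)‖ ≤ h * a s * (ν s * K) := by
        calc (a s - a (s + h)) * ‖u (n + 1)‖ ≤ h * ν s * a s ^ 2 * ‖u (n + 1)‖ :=
              mul_le_mul_of_nonneg_right hdecs (norm_nonneg _)
          _ = h * ν s * a s * (a s * ‖u (n + 1)‖) := by ring
          _ ≤ h * ν s * a s * K := mul_le_mul_of_nonneg_left hvnorm (by positivity)
          _ = h * a s * (ν s * K) := by ring
      have hha : h * a s ≤ γ n * a s := mul_le_mul_of_nonneg_right hγn.1 hα.le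
      have hq0 : 0 ≤ 1 - h * a s := by linarith [hres.1]
      have hrec : ‖F (u (n + 1)) + a (s + h) • u (n + 1) - fδ‖ ≤
          (1 - h * a s) * ‖F (u n) + a s • u n - fδ‖ + h * a s * (ν s * K) := by
        have := mul_le_mul_of_nonneg_right (sub_le_sub_left hha 1)
          (norm_nonneg (F (u n) + a s • u n - fδ))
        linarith [hres.2]
      have hhas : 0 ≤ h * a s := by positivity
      have hgG : ‖F (u (n + 1)) + a (s + h) • u (n + 1) - fδ‖ ≤ G := by
        have h1 := mul_le_mul_of_nonneg_left ih2 hq0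
        have h2 : ν s * K ≤ G := (mul_le_mul_of_nonneg_right hνs hK0.le).trans hGν
        have h3 := mul_le_mul_of_nonneg_left h2 hhas
        linarith
      refine ⟨?_, hgG, ?_⟩
      · have := div_le_div_of_nonneg_left hδ0.le hβ hβα
        linarith
      · rcases le_total s T₁ with hsT | hsT
        · have := hLG (s + h) (by linarith) (by linarith)
          linarith
        · obtain ⟨hν1, hνε⟩ := hT₁ s hsT
          have h1 := mul_le_mul_of_nonneg_left ih3 hq0
          have h2 := mul_le_mul_of_nonneg_left hνε hhas
          -- `ν ≤ 1` makes `a` decay no faster than the contraction factors.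
          have h3 : (1 - h * a s) * a s ≤ a (s + h) := by
            have : h * ν s * a s ^ 2 ≤ h * 1 * a s ^ 2 := by gcongr
            linarith
          have h4 := mul_le_mul_of_nonneg_left h3 hL0
          linarith
  have hex : ∃ n : ℕ, ‖F (u n) - fδ‖ ≤ κ := by
    have hc1 : T₂ ≤ (⌈T₂ / h⌉₊ : ℝ) * h := (div_le_iff₀ hh0).1 (Nat.le_ceil _)
    have hc2 : (⌈T₂ / h⌉₊ : ℝ) * h ≤ T₂ + 1 := by
      have h1 := (Nat.ceil_lt_add_one (div_nonneg hT₂0 hh0.le)).le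
      have h2 := mul_le_mul_of_nonneg_right h1 hh0.le
      have h3 : (T₂ / h + 1) * h = T₂ + h := by field_simp
      linarith
    refine ⟨⌈T₂ / h⌉₊, ?_⟩
    generalize ⌈T₂ / h⌉₊ = n at *
    obtain ⟨k1, _, k3⟩ := key n hc2
    have hsmall := hT₂ _ hc1
    have hs0 := hnh n
    generalize (n : ℝ) * h = s at *
    have hα := ha_pos s hs0
    have hun : a s * ‖u n‖ ≤ M * a s + δ := by
      have h3 : ‖u n‖ ≤ ‖y‖ + ‖u n - y‖ := by
        simpa using norm_add_le y (u n - y)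
      have h4 : a s * ‖u n‖ ≤ a s * (M + δ / a s) :=
        mul_le_mul_of_nonneg_left (by linarith) hα.le
      have h5 : a s * (M + δ / a s) = M * a s + δ := by field_simp
      linarith
    have e : F (u n) - fδ = (F (u n) + a s • u n - fδ) - a s • u n := by abel
    rw [e]
    refine (norm_sub_le _ _).trans ?_
    rw [norm_smul, Real.norm_of_nonneg hα.le]
    linarith
  classical
  refine ⟨Nat.find hex, ⟨?_, Nat.find_spec hex, fun m hm => not_le.1 (Nat.find_min hex hm)⟩, ?_⟩
  · rw [Nat.one_le_iff_ne_zero]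
    intro h0
    have := Nat.find_spec hex
    rw [h0, hu0eq] at this
    linarith
  · rintro m ⟨_, hm1, hm2⟩
    exact ((Nat.find_eq_iff hex).2 ⟨hm1, fun k hk => not_le.2 (hm2 k hk)⟩).symm
end
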